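/- Let n ≥ 1, κ > 1, and let d, r ∈ ℝ^n have strictly positive entries. For every l > 0, the minimum of ‖s − d‖₂² over all s ∈ ℝ^n satisfying l·r_i ≤ s_i ≤ κ·l·r_i for all i is attained at the vector s* with s*_i = l·r_i if i ∈ A(l), s*_i = d_i if i ∉ A(l) ∪ B(l), and s*_i = κ·l·r_i if i ∈ B(l), and this minimum value equals g(l). Consequently, the minimum of ‖s − d‖₂² over all pairs (s, l) with l > 0 and l·r_i ≤ s_i ≤ κ·l·r_i for all i equals the infimum over l > 0 of g(l). -/

import Mathlib

open Finset

/-!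
The squared distance to a box separates over coordinates, so its minimizer is the coordinatewise
clamp of `d` to `[l r_i, κ l r_i]`, which is `sstar l`. For `l > 0` the sets `A(l)` and `B(l)` are
disjoint because `l r_i < κ l r_i`, and coordinates outside both contribute nothing, so the squared
distance is `g l`. For the joint problem, every `g l` is a feasible value and every feasible value
at scale `l` is at least `g l`; both value sets are nonempty and bounded below by `0`, hence their
infima agree.
-/

/-- For each `l > 0` the inner minimization over the box `[l·r_i, κ·l·r_i]` is attained at
the explicit projection `s*(l)` with value `g(l)`, and hence the full problem
`min_{s, l>0} ‖s − d‖₂²` has optimal value `inf_{l>0} g(l)`. -/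
theorem box_projection_reduces_to_g (n : ℕ) (hn : 1 ≤ n) (κ : ℝ) (hκ : 1 < κ)
    (d r : Fin n → ℝ) (hd : ∀ i, 0 < d i) (hr : ∀ i, 0 < r i)
    (g : ℝ → ℝ)
    (hg : ∀ l : ℝ, g l =
      (∑ i ∈ Finset.univ.filter (fun i => d i ≤ l * r i), (d i - r i * l) ^ 2) +
      ∑ i ∈ Finset.univ.filter (fun i => κ * l * r i ≤ d i), (d i - κ * r i * l) ^ 2)
    (sstar : ℝ → Fin n → ℝ)
    (hsstar : ∀ (l : ℝ) (i : Fin n), sstar l i =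
      if d i ≤ l * r i then l * r i
      else if κ * l * r i ≤ d i then κ * l * r i
      else d i) :
    (∀ l : ℝ, 0 < l →
      (∀ i, l * r i ≤ sstar l i ∧ sstar l i ≤ κ * l * r i) ∧
      (∀ s : Fin n → ℝ, (∀ i, l * r i ≤ s i ∧ s i ≤ κ * l * r i) →
        ∑ i, (sstar l i - d i) ^ 2 ≤ ∑ i, (s i - d i) ^ 2) ∧
      ∑ i, (sstar l i - d i) ^ 2 = g l) ∧
    sInf {v : ℝ | ∃ (s : Fin n → ℝ) (l : ℝ), 0 < l ∧
        (∀ i, l * r i ≤ s i ∧ s i ≤ κ * l * r i) ∧ v = ∑ i, (s i - d i) ^ 2} =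
      sInf {v : ℝ | ∃ l : ℝ, 0 < l ∧ v = g l} := by
  have key : ∀ l : ℝ, 0 < l →
      (∀ i, l * r i ≤ sstar l i ∧ sstar l i ≤ κ * l * r i) ∧
      (∀ s : Fin n → ℝ, (∀ i, l * r i ≤ s i ∧ s i ≤ κ * l * r i) →
        ∑ i, (sstar l i - d i) ^ 2 ≤ ∑ i, (s i - d i) ^ 2) ∧
      ∑ i, (sstar l i - d i) ^ 2 = g l := by
    intro l hl
    have hlt : ∀ i, l * r i < κ * l * r i := fun i => by
      nlinarith [mul_pos hl (hr i)]
    refine ⟨fun i => ?_, fun s hs => Finset.sum_le_sum fun i _ => ?_, ?_⟩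
    · have := hlt i
      rw [hsstar]
      split_ifs <;> constructor <;> linarith
    · obtain ⟨h1, h2⟩ := hs i
      rw [hsstar]
      split_ifs with hA hB
      · exact pow_le_pow_left₀ (by linarith) (by linarith) 2
      · rw [sub_sq_comm _ (d i), sub_sq_comm (s i)]
        exact pow_le_pow_left₀ (by linarith) (by linarith) 2
      · simpa using sq_nonneg (s i - d i)
    · rw [hg, Finset.sum_filter, Finset.sum_filter, ← Finset.sum_add_distrib]
      refine Finset.sum_congr rfl fun i _ => ?_
      have := hlt i
      rw [hsstar]
      split_ifs with hA hB hB
      -- The first case, `i ∈ A(l) ∩ B(l)`, is impossible.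
      · linarith
      · ring
      · ring
      · ring
  refine ⟨key, le_antisymm ?_ ?_⟩
  · refine le_csInf ⟨g 1, 1, one_pos, rfl⟩ ?_
    rintro v ⟨l, hl, rfl⟩
    refine csInf_le ⟨0, ?_⟩ ⟨sstar l, l, hl, (key l hl).1, (key l hl).2.2.symm⟩
    rintro v ⟨s, -, -, -, rfl⟩
    positivity
  · refine le_csInf ⟨_, sstar 1, 1, one_pos, (key 1 one_pos).1, rfl⟩ ?_
    rintro v ⟨s, l, hl, hs, rfl⟩
    refine le_trans (csInf_le ⟨0, ?_⟩ ⟨l, hl, rfl⟩) ((key l hl).2.2 ▸ (key l hl).2.1 s hs)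
    rintro v ⟨l, -, rfl⟩
    rw [hg]
    positivity
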